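/- Let X, Y be real Banach spaces, U ⊆ X and V ⊆ Y open, g : U → ℝ continuous and a C^{1,1}-submersion on its zero set, Ω = {x ∈ U : g(x) ≤ 0} closed and connected, F : U → V a C^{1,1}-diffeomorphism, and F(Ω) closed. Let 𝒟² be any one of the four generalized second-order directional derivative operators. Then F(Ω) is convex if and only if 𝒟²(y ↦ g'(x)(F'(x)⁻¹ F(y)))(x,h²) ≤ 𝒟²g(x,h²) for all x ∈ ∂Ω and all h ∈ ker g'(x). -/

import Mathlib

open Filter Topology Metric

/-- Lower right generalized second-order directional derivative
`D̲²₊f(x,h,k) = liminf_{t↓0} (f'(x+th)k − f'(x)k)/t`. -/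
noncomputable def lowD2p {X : Type*} [NormedAddCommGroup X] [NormedSpace ℝ X]
    (f : X → ℝ) (x h k : X) : ℝ :=
  liminf (fun t : ℝ => (fderiv ℝ f (x + t • h) k - fderiv ℝ f x k) / t) (𝓝[>] (0:ℝ))

/-- Upper right generalized second-order directional derivative. -/
noncomputable def upD2p {X : Type*} [NormedAddCommGroup X] [NormedSpace ℝ X]
    (f : X → ℝ) (x h k : X) : ℝ :=
  limsup (fun t : ℝ => (fderiv ℝ f (x + t • h) k - fderiv ℝ f x k) / t) (𝓝[>] (0:ℝ))

/-- Lower left generalized second-order directional derivative. -/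
noncomputable def lowD2m {X : Type*} [NormedAddCommGroup X] [NormedSpace ℝ X]
    (f : X → ℝ) (x h k : X) : ℝ :=
  liminf (fun t : ℝ => (fderiv ℝ f (x + t • h) k - fderiv ℝ f x k) / t) (𝓝[<] (0:ℝ))

/-- Upper left generalized second-order directional derivative. -/
noncomputable def upD2m {X : Type*} [NormedAddCommGroup X] [NormedSpace ℝ X]
    (f : X → ℝ) (x h k : X) : ℝ :=
  limsup (fun t : ℝ => (fderiv ℝ f (x + t • h) k - fderiv ℝ f x k) / t) (𝓝[<] (0:ℝ))

/-- `g` is a `C^{1,1}`-submersion on its zero set. -/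
def IsC11SubmersionOnZeroSet {X : Type*} [NormedAddCommGroup X] [NormedSpace ℝ X]
    (g : X → ℝ) (U : Set X) : Prop :=
  ∀ x ∈ U, g x = 0 →
    (∃ ε > 0, ball x ε ⊆ U ∧ ContDiffOn ℝ 1 g (ball x ε) ∧
      ∃ L : NNReal, LipschitzOnWith L (fun y => fderiv ℝ g y) (ball x ε)) ∧
    fderiv ℝ g x ≠ 0

/-- `F : U → V` is a `C^{1,1}`-diffeomorphism with inverse `G`: a bijection from `U` onto `V`
which is `C¹` with locally Lipschitz derivative, with inverse of the same class. -/
def IsC11DiffeoOn {X Y : Type*} [NormedAddCommGroup X] [NormedSpace ℝ X]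
    [NormedAddCommGroup Y] [NormedSpace ℝ Y]
    (F : X → Y) (G : Y → X) (U : Set X) (V : Set Y) : Prop :=
  Set.MapsTo F U V ∧ Set.MapsTo G V U ∧
    (∀ x ∈ U, G (F x) = x) ∧ (∀ y ∈ V, F (G y) = y) ∧
    ContDiffOn ℝ 1 F U ∧
    (∀ x ∈ U, ∃ ε > 0, ∃ L : NNReal,
      LipschitzOnWith L (fun y => fderiv ℝ F y) (ball x ε ∩ U)) ∧
    ContDiffOn ℝ 1 G V ∧
    (∀ y ∈ V, ∃ ε > 0, ∃ L : NNReal,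
      LipschitzOnWith L (fun z => fderiv ℝ G z) (ball y ε ∩ V))


/-- discrete minimum principle -/
lemma disc_concave (n : ℕ) (f : ℕ → ℝ) (h0 : 0 ≤ f 0) (hn : 0 ≤ f n)
    (hc : ∀ i, i + 2 ≤ n → f i + f (i + 2) ≤ 2 * f (i + 1)) : ∀ i ≤ n, 0 ≤ f i := by
  obtain ⟨j, hj, hmin⟩ := Finset.exists_min_image (Finset.range (n + 1)) f ⟨0, by simp⟩
  simp only [Finset.mem_range] at hj hmin
  suffices h : 0 ≤ f j by
    intro i hi
    exact h.trans (hmin i (by omega))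
  classical
  have hex : ∃ i, i ≤ n ∧ f i = f j := ⟨j, by omega, rfl⟩
  obtain ⟨hm1, hm2⟩ := Nat.find_spec hex
  have hm3 : ∀ i, i < Nat.find hex → ¬ (i ≤ n ∧ f i = f j) := fun i hi => Nat.find_min hex hi
  generalize Nat.find hex = m at hm1 hm2 hm3
  by_contra hneg
  push Not at hneg
  have hm0 : m ≠ 0 := by rintro rfl; linarith
  have hmn : m ≠ n := by rintro rfl; linarith
  obtain ⟨i, rfl⟩ : ∃ i, m = i + 1 := ⟨m - 1, by omega⟩
  have h1 := hc i (by omega)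
  have h2 : f j ≤ f i := hmin i (by omega)
  have h3 : f j ≤ f (i + 2) := hmin (i + 2) (by omega)
  have h4 := hm3 i (by omega)
  apply h4
  exact ⟨by omega, by linarith⟩

lemma tietze_open {Y : Type*} [NormedAddCommGroup Y] [NormedSpace ℝ Y] (K : Set Y)
    (hK : IsClosed K) (hloc : ∀ p ∈ K, ∃ ε > 0, Convex ℝ (K ∩ ball p ε)) (a z : Y)
    (hseg : segment ℝ z a ⊆ K) :
    ∃ ε > 0, ∀ z' ∈ K, z' ∈ ball z ε → segment ℝ z' a ⊆ K := by
  choose! e he0 he using hloc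
  have hcomp : IsCompact (segment ℝ z a) := by
    rw [segment_eq_image_lineMap]
    exact isCompact_Icc.image AffineMap.lineMap_continuous
  obtain ⟨δ, hδ, hleb⟩ := lebesgue_number_lemma_of_metric (c := fun p : segment ℝ z a => ball p.1 (e p.1))
    hcomp (fun i => isOpen_ball) (fun p hp => Set.mem_iUnion.2 ⟨⟨p, hp⟩, mem_ball_self (he0 p (hseg hp))⟩)
  have hconv : ∀ p ∈ segment ℝ z a, Convex ℝ (K ∩ ball p δ) := by
    intro p hp
    obtain ⟨i, hi⟩ := hleb p hp
    have : K ∩ ball p δ = (K ∩ ball i.1 (e i.1)) ∩ ball p δ := by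
      ext q
      constructor
      · rintro ⟨h1, h2⟩; exact ⟨⟨h1, hi h2⟩, h2⟩
      · rintro ⟨⟨h1, _⟩, h2⟩; exact ⟨h1, h2⟩
    rw [this]
    exact (he i.1 (hseg i.2)).inter (convex_ball _ _)
  obtain ⟨n, hn⟩ := exists_nat_gt (max 1 (‖a - z‖ * 4 / δ))
  have hn1 : (1 : ℝ) < n := (le_max_left _ _).trans_lt hn
  have hn0 : (0 : ℝ) < n := by linarith
  have hn2 : ‖a - z‖ / n < δ / 4 := by
    have := (le_max_right _ _).trans_lt hn
    rw [div_lt_iff₀ hδ] at this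
    rw [div_lt_iff₀ hn0]; linarith
  refine ⟨δ / 4, by positivity, fun z' hz' hzz => ?_⟩
  set d := z' - z with hd
  have hdn : ‖d‖ < δ / 4 := by rwa [mem_ball, dist_eq_norm] at hzz
  set p : ℝ → Y := fun θ => z + θ • (a - z) with hp
  have hpseg : ∀ θ, 0 ≤ θ → θ ≤ 1 → p θ ∈ segment ℝ z a := by
    intro θ h0 h1
    rw [segment_eq_image']
    exact ⟨θ, ⟨h0, h1⟩, rfl⟩
  have hball : ∀ θ θ' h : ℝ, |θ' - θ| ≤ 1 / n → 0 ≤ h → h ≤ 1 → p θ' + h • d ∈ ball (p θ) δ := by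
    intro θ θ' h h1 h2 h3
    rw [mem_ball, dist_eq_norm]
    have : p θ' + h • d - p θ = (θ' - θ) • (a - z) + h • d := by simp only [hp]; module
    rw [this]
    calc _ ≤ ‖(θ' - θ) • (a - z)‖ + ‖h • d‖ := norm_add_le _ _
      _ = |θ' - θ| * ‖a - z‖ + h * ‖d‖ := by rw [norm_smul, norm_smul, Real.norm_eq_abs, Real.norm_eq_abs, abs_of_nonneg h2]
      _ ≤ 1 / n * ‖a - z‖ + 1 * ‖d‖ := by gcongr
      _ = ‖a - z‖ / n + ‖d‖ := by ring
      _ < δ := by linarith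
  have h1n : (0:ℝ) ≤ 1 / n := by positivity
  set A : ℕ → Set ℝ := fun i => Set.Icc (0:ℝ) 1 ∩ (fun h : ℝ => p (i / n) + h • d) ⁻¹' K with hA
  have hAc : ∀ i, IsCompact (A i) := fun i =>
    isCompact_Icc.inter_right (hK.preimage (by fun_prop))
  have hin : ∀ i : ℕ, i ≤ n → (i : ℝ) / n ≤ 1 := fun i hi => by
    rw [div_le_one hn0]; exact_mod_cast hi
  have hi0 : ∀ i : ℕ, 0 ≤ (i : ℝ) / n := fun i => by positivity
  have hA0 : ∀ i ≤ n, (0:ℝ) ∈ A i := fun i hi => by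
    refine ⟨by simp, ?_⟩
    simpa using hseg (hpseg _ (hi0 i) (hin i hi))
  set H : ℕ → ℝ := fun i => sSup (A i) with hH
  have hHm : ∀ i ≤ n, H i ∈ A i := fun i hi => (hAc i).sSup_mem ⟨0, hA0 i hi⟩
  have hHle : ∀ i, ∀ h ∈ A i, h ≤ H i := fun i h hh => le_csSup (hAc i).bddAbove hh
  have key := disc_concave n (fun i => H i - (1 - (i:ℝ) / n))
    (by
      have : (1:ℝ) ∈ A 0 := by
        refine ⟨by simp, ?_⟩
        simp [hp, hd, hz']
      have := hHle 0 1 this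
      simp; linarith)
    (by
      have := (hHm n le_rfl).1.1
      simp [div_self hn0.ne']; linarith)
    (by
      intro i hi
      have h1 := hHm i (by omega)
      have h2 := hHm (i + 2) hi
      have hmem : (H i + H (i + 2)) / 2 ∈ A (i + 1) := by
        refine ⟨⟨by linarith [h1.1.1, h2.1.1], by linarith [h1.1.2, h2.1.2]⟩, ?_⟩
        have hc := hconv (p ((i + 1 : ℕ) / n)) (hpseg _ (hi0 _) (hin _ (by omega)))
        have e1 : ((i:ℝ)/n) - ((i+1 : ℕ) : ℝ) / n = - (1 / n) := by push_cast; ring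
        have e2 : (((i + 2 : ℕ):ℝ)/n) - ((i+1 : ℕ) : ℝ) / n = (1 / n) := by push_cast; ring
        have m1 : p (i / n) + H i • d ∈ K ∩ ball (p ((i + 1 : ℕ) / n)) δ :=
          ⟨h1.2, hball _ _ _ (by rw [e1, abs_neg, abs_of_nonneg h1n]) h1.1.1 h1.1.2⟩
        have m2 : p ((i + 2 : ℕ) / n) + H (i + 2) • d ∈ K ∩ ball (p ((i + 1 : ℕ) / n)) δ :=
          ⟨h2.2, hball _ _ _ (by rw [e2, abs_of_nonneg h1n]) h2.1.1 h2.1.2⟩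
        have := (hc m1 m2 (a := 1/2) (b := 1/2) (by norm_num) (by norm_num) (by norm_num)).1
        have e3 : (1/2 : ℝ) • (p (i / n) + H i • d) + (1/2 : ℝ) • (p ((i + 2 : ℕ) / n) + H (i + 2) • d)
            = p ((i + 1 : ℕ) / n) + ((H i + H (i + 2)) / 2) • d := by
          simp only [hp]; push_cast; module
        rw [e3] at this
        exact this
      have := hHle _ _ hmem
      push_cast
      have e : ((i:ℝ) + 2) / n + i / n = 2 * ((i + 1) / n) := by ring
      linarith)
  have hq : ∀ i ≤ n, p (i / n) + (1 - (i:ℝ)/n) • d ∈ K := by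
    intro i hi
    have h1 := hHm i hi
    have h2 := key i hi
    have hc := hconv (p (i / n)) (hpseg _ (hi0 _) (hin _ hi))
    have m0 := hA0 i hi
    have n1 : p (i / n) + (0:ℝ) • d ∈ K ∩ ball (p (i / n)) δ :=
      ⟨m0.2, hball _ _ _ (by simp) m0.1.1 m0.1.2⟩
    have n2 : p (i / n) + H i • d ∈ K ∩ ball (p (i / n)) δ :=
      ⟨h1.2, hball _ _ _ (by simp) h1.1.1 h1.1.2⟩
    rcases eq_or_lt_of_le h1.1.1 with h0 | hpos
    · have : 1 - (i:ℝ)/n = 0 := by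
        have := hin i hi
        linarith
      rw [this]; exact n1.1
    · set c := (1 - (i:ℝ)/n) / H i with hcdef
      have hc0 : 0 ≤ c := div_nonneg (by linarith [hin i hi]) hpos.le
      have hc1 : c ≤ 1 := by rw [div_le_one hpos]; linarith
      have := (hc n1 n2 (a := 1 - c) (b := c) (by linarith) hc0 (by ring)).1
      have e3 : (1 - c) • (p (i / n) + (0:ℝ) • d) + c • (p (i / n) + H i • d) = p (i/n) + (c * H i) • d := by module
      rw [e3, hcdef, div_mul_cancel₀ _ hpos.ne'] at this
      exact this
  rw [segment_eq_image']
  rintro _ ⟨θ, ⟨hθ0, hθ1⟩, rfl⟩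
  have hza : z' + θ • (a - z') = p θ + (1 - θ) • d := by simp only [hp, hd]; module
  simp only [hza]
  set i := ⌊θ * n⌋₊ with hi
  have hi1 : (i:ℝ) ≤ θ * n := Nat.floor_le (by positivity)
  have hi2 : θ * n < i + 1 := Nat.lt_floor_add_one _
  rcases eq_or_lt_of_le hθ1 with h1 | h1
  · have := hq n le_rfl
    rw [div_self hn0.ne'] at this
    rw [h1]; exact this
  · have hlt : i < n := by
      have : (i:ℝ) < n := by nlinarith
      exact_mod_cast this
    have q1 := hq i hlt.le
    have q2 := hq (i + 1) hlt
    have hc := hconv (p (i / n)) (hpseg _ (hi0 _) (hin _ hlt.le))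
    have e2 : (((i + 1 : ℕ):ℝ)/n) - (i : ℝ) / n = (1 / n) := by push_cast; ring
    have n1 : _ ∈ K ∩ ball (p (i / n)) δ :=
      ⟨q1, hball _ _ _ (by simp) (by linarith [hin i hlt.le]) (by linarith [hi0 i])⟩
    have n2 : _ ∈ K ∩ ball (p (i / n)) δ :=
      ⟨q2, hball _ _ _ (by rw [e2, abs_of_nonneg h1n]) (by linarith [hin (i+1) hlt]) (by linarith [hi0 (i+1)])⟩
    have := (hc n1 n2 (a := 1 - (θ * n - i)) (b := θ * n - i) (by linarith) (by linarith) (by ring)).1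
    have e4 : θ = (1 - (θ * n - i)) * (i / n) + (θ * n - i) * ((i + 1 : ℕ) / n) := by
      push_cast; field_simp; ring
    convert this using 1
    conv_lhs => rw [e4]
    simp only [hp]
    module

lemma tietze {Y : Type*} [NormedAddCommGroup Y] [NormedSpace ℝ Y] (K : Set Y)
    (hK : IsClosed K) (hconn : IsPreconnected K)
    (hloc : ∀ p ∈ K, ∃ ε > 0, Convex ℝ (K ∩ ball p ε)) : Convex ℝ K := by
  rw [convex_iff_segment_subset]
  intro z hz a ha
  by_contra hcon
  have hop := tietze_open K hK hloc a
  set S := {z | segment ℝ z a ⊆ K} with hS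
  have hScl : IsClosed S := by
    have : S = ⋂ θ ∈ Set.Icc (0:ℝ) 1, (fun z => z + θ • (a - z)) ⁻¹' K := by
      ext w
      simp only [hS, segment_eq_image', Set.subset_def, Set.mem_image, Set.mem_ofPred_eq,
        Set.mem_iInter, Set.mem_preimage]
      constructor
      · intro h θ hθ
        exact h _ ⟨θ, hθ, rfl⟩
      · rintro h _ ⟨θ, hθ, rfl⟩
        exact h θ hθ
    rw [this]
    exact isClosed_biInter fun θ _ => hK.preimage (by fun_prop)
  choose! e he0 he using hop
  have := hconn (⋃ w ∈ S, ball w (e w)) Sᶜ (isOpen_biUnion fun _ _ => isOpen_ball) hScl.isOpen_compl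
    (fun w hw => by
      by_cases h : w ∈ S
      · exact Or.inl (Set.mem_biUnion h (mem_ball_self (he0 w h)))
      · exact Or.inr h)
    ⟨a, ha, Set.mem_biUnion (x := a) (by simpa [hS] using ha) (mem_ball_self (he0 a (by simpa using ha)))⟩
    ⟨z, hz, hcon⟩
  obtain ⟨w, hw, hw1, hw2⟩ := this
  simp only [Set.mem_iUnion] at hw1
  obtain ⟨u, hu, huw⟩ := hw1
  exact hw2 (he u hu w hw huw)

/-- One-dimensional implicit curve: concavity. -/
lemma curve_concave {Y : Type*} [NormedAddCommGroup Y] [NormedSpace ℝ Y] (φ : Y → ℝ) (B : Set Y)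
    (hB : IsOpen B) (hd : ∀ z ∈ B, DifferentiableAt ℝ φ z) (L : NNReal)
    (hL : LipschitzOnWith L (fderiv ℝ φ) B) (v : Y) (hv : ∀ z ∈ B, 1 / 2 ≤ fderiv ℝ φ z v)
    (hcond : ∀ y ∈ B, φ y = 0 → ∀ k, fderiv ℝ φ y k = 0 → ∀ η > 0,
      ∃ᶠ t in 𝓝[>] (0:ℝ), -η < fderiv ℝ φ (y + t • k) k / t)
    (a k : Y) (σ : ℝ → ℝ) (J : Set ℝ) (hJ : IsOpen J) (hIJ : Set.Icc 0 1 ⊆ J)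
    (hγB : ∀ r ∈ J, a + r • k + σ r • v ∈ B) (hγ0 : ∀ r ∈ J, φ (a + r • k + σ r • v) = 0)
    (C : ℝ) (hC : ∀ r ∈ J, ∀ r' ∈ J, |σ r' - σ r| ≤ C * |r' - r|) :
    ConcaveOn ℝ (Set.Icc 0 1) σ := by
  set γ : ℝ → Y := fun r => a + r • k + σ r • v with hγ
  set w : ℝ → ℝ := fun r => - fderiv ℝ φ (γ r) k / fderiv ℝ φ (γ r) v with hw
  have hv0 : ∀ z ∈ B, fderiv ℝ φ z v ≠ 0 := fun z hz => by have := hv z hz; linarith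
  have hσbig : ∀ r ∈ J, (fun r' => σ r' - σ r) =O[𝓝 r] (fun r' => r' - r) := by
    intro r hr
    refine Asymptotics.IsBigO.of_bound C ?_
    filter_upwards [hJ.mem_nhds hr] with r' hr'
    exact hC r hr r' hr'
  have hsub : ∀ r r', γ r' - γ r = (r' - r) • k + (σ r' - σ r) • v := by
    intro r r'; simp only [hγ]; module
  have hγbig : ∀ r ∈ J, (fun r' => γ r' - γ r) =O[𝓝 r] (fun r' => r' - r) := by
    intro r hr
    simp only [hsub]
    refine Asymptotics.IsBigO.add ?_ ?_
    · refine Asymptotics.IsBigO.of_bound ‖k‖ (Eventually.of_forall fun r' => ?_)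
      rw [norm_smul, mul_comm]
    · refine Asymptotics.IsBigO.trans ?_ (hσbig r hr)
      refine Asymptotics.IsBigO.of_bound ‖v‖ (Eventually.of_forall fun r' => ?_)
      rw [norm_smul, mul_comm]
  have hto0 : ∀ r : ℝ, Tendsto (fun r' => r' - r) (𝓝 r) (𝓝 0) := by
    intro r
    have : Continuous fun r' : ℝ => r' - r := by fun_prop
    simpa using this.tendsto r
  have hγcont : ∀ r ∈ J, ContinuousAt γ r := by
    intro r hr
    have := (hγbig r hr).trans_tendsto (hto0 r)
    have h2 := this.add_const (γ r)
    simpa [ContinuousAt] using h2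
  have hσder : ∀ r ∈ J, HasDerivAt σ (w r) r := by
    intro r hr
    have h1 := (hd _ (hγB r hr)).hasFDerivAt.isLittleO
    have h2 := (h1.comp_tendsto (hγcont r hr)).trans_isBigO (hγbig r hr)
    rw [hasDerivAt_iff_isLittleO]
    refine (Asymptotics.IsBigO.of_bound (2:ℝ) ?_).trans_isLittleO h2
    filter_upwards [hJ.mem_nhds hr] with r' hr'
    have e : φ (γ r') - φ (γ r) = 0 := by
      have h1 : φ (γ r') = 0 := hγ0 r' hr'
      have h2 : φ (γ r) = 0 := hγ0 r hr
      rw [h1, h2, sub_zero]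
    have hvr := hv (γ r) (hγB r hr)
    have hvr0 := hv0 (γ r) (hγB r hr)
    simp only [Function.comp]
    have e2 : φ (γ r') - φ (γ r) - fderiv ℝ φ (γ r) (γ r' - γ r)
        = - (fderiv ℝ φ (γ r) v) * (σ r' - σ r - (r' - r) • w r) := by
      rw [e, hsub]
      simp only [map_add, map_smul, smul_eq_mul, hw]
      field_simp
      ring
    change ‖σ r' - σ r - (r' - r) • w r‖ ≤ 2 * ‖φ (γ r') - φ (γ r) - fderiv ℝ φ (γ r) (γ r' - γ r)‖
    rw [e2, norm_mul, norm_neg, Real.norm_of_nonneg (show 0 ≤ fderiv ℝ φ (γ r) v by linarith)]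
    nlinarith [norm_nonneg (σ r' - σ r - (r' - r) • w r)]
  have hfc : ∀ r ∈ J, ContinuousAt (fun r' => fderiv ℝ φ (γ r')) r := by
    intro r hr
    have : ContinuousAt (fderiv ℝ φ) (γ r) := hL.continuousOn.continuousAt (hB.mem_nhds (hγB r hr))
    exact ContinuousAt.comp this (hγcont r hr)
  have hwc : ∀ r ∈ J, ContinuousAt w r := by
    intro r hr
    have h1 := hfc r hr
    exact ((h1.clm_apply continuousAt_const).neg).div (h1.clm_apply continuousAt_const)
      (hv0 _ (hγB r hr))
  have hslope : ∀ r ∈ J, ∀ η > 0, ∃ᶠ z in 𝓝[>] r, slope w r z < η := by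
    intro r hr η hη
    set τ := k + w r • v with hτ
    have hB' := hγB r hr
    have hτ0 : fderiv ℝ φ (γ r) τ = 0 := by
      have : fderiv ℝ φ (γ r) v ≠ 0 := hv0 _ hB'
      simp only [hτ, map_add, map_smul, smul_eq_mul, hw]
      field_simp
      ring
    have hγder : HasDerivAt γ τ r := by
      have h1 : HasDerivAt (fun r : ℝ => a + r • k + σ r • v) ((1:ℝ) • k + w r • v) r :=
        (((hasDerivAt_id r).smul_const k).const_add a).add ((hσder r hr).smul_const v)
      simpa [hτ] using h1
    have hf := hcond (γ r) hB' (hγ0 r hr) τ hτ0 (η / 4) (by positivity)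
    have hmap : 𝓝[>] r = map (fun t => r + t) (𝓝[>] (0:ℝ)) := by
      rw [map_add_left_nhdsGT]; simp
    rw [hmap, frequently_map]
    have hsmall : (fun t : ℝ => γ (r + t) - (γ r + t • τ)) =o[𝓝[>] (0:ℝ)] (fun t => t) := by
      have := hasDerivAt_iff_isLittleO_nhds_zero.1 hγder
      refine (this.mono nhdsWithin_le_nhds).congr_left ?_
      intro t; abel
    have ev1 := hsmall.def (c := η / (8 * (L * ‖τ‖ + 1))) (by positivity)
    have hJev : ∀ᶠ t in 𝓝[>] (0:ℝ), r + t ∈ J := by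
      have : Tendsto (fun t : ℝ => r + t) (𝓝[>] (0:ℝ)) (𝓝 r) := by
        have : Continuous fun t : ℝ => r + t := by fun_prop
        have := this.tendsto 0
        rw [add_zero] at this
        exact this.mono_left nhdsWithin_le_nhds
      exact this.eventually (hJ.mem_nhds hr)
    have hBev : ∀ᶠ t in 𝓝[>] (0:ℝ), γ r + t • τ ∈ B := by
      have : Tendsto (fun t : ℝ => γ r + t • τ) (𝓝[>] (0:ℝ)) (𝓝 (γ r)) := by
        have : Continuous fun t : ℝ => γ r + t • τ := by fun_prop
        have := this.tendsto 0
        simp only [zero_smul, add_zero] at this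
        exact this.mono_left nhdsWithin_le_nhds
      exact this.eventually (hB.mem_nhds hB')
    refine (hf.and_eventually ((ev1.and hJev).and (hBev.and self_mem_nhdsWithin))).mono ?_
    rintro t ⟨h1, ⟨h2, h3⟩, h4, h5⟩
    have ht : 0 < t := h5
    have hB2 := hγB _ h3
    have hvt := hv _ hB2
    have hvt0 := hv0 _ hB2
    have hvr0 := hv0 _ hB'
    have e1 : w (r + t) - w r = - fderiv ℝ φ (γ (r + t)) τ / fderiv ℝ φ (γ (r + t)) v := by
      simp only [hτ, map_add, map_smul, smul_eq_mul]
      have : w (r + t) = - fderiv ℝ φ (γ (r + t)) k / fderiv ℝ φ (γ (r + t)) v := rfl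
      rw [this, eq_div_iff hvt0, sub_mul, div_mul_cancel₀ _ hvt0]
      ring
    rw [slope_def_field, e1, add_sub_cancel_left]
    have h6 : |fderiv ℝ φ (γ (r + t)) τ - fderiv ℝ φ (γ r + t • τ) τ| ≤ η / 8 * t := by
      calc |fderiv ℝ φ (γ (r + t)) τ - fderiv ℝ φ (γ r + t • τ) τ|
          = ‖(fderiv ℝ φ (γ (r + t)) - fderiv ℝ φ (γ r + t • τ)) τ‖ := rfl
        _ ≤ ‖fderiv ℝ φ (γ (r + t)) - fderiv ℝ φ (γ r + t • τ)‖ * ‖τ‖ := ContinuousLinearMap.le_opNorm _ _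
        _ ≤ (L * ‖γ (r + t) - (γ r + t • τ)‖) * ‖τ‖ := by
          gcongr; exact hL.norm_sub_le hB2 h4
        _ ≤ (L * (η / (8 * (L * ‖τ‖ + 1)) * ‖t‖)) * ‖τ‖ := by gcongr
        _ = η / 8 * t * (L * ‖τ‖ / (L * ‖τ‖ + 1)) := by
          rw [Real.norm_of_nonneg ht.le]
          field_simp
        _ ≤ η / 8 * t * 1 := by
          gcongr
          rw [div_le_one (by positivity)]; linarith
        _ = _ := by ring
    rw [lt_div_iff₀ ht] at h1
    rw [div_lt_iff₀ ht, div_lt_iff₀ (by linarith)]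
    have := (abs_le.1 h6).1
    nlinarith [mul_pos hη ht]
  have hanti : AntitoneOn w (Set.Icc 0 1) := by
    intro r1 h1 r2 h2 h12
    have hsub : Set.Icc r1 r2 ⊆ J := fun x hx => hIJ ⟨h1.1.trans hx.1, hx.2.trans h2.2⟩
    exact image_le_of_liminf_slope_right_le_deriv_boundary (f := w) (a := r1) (b := r2)
      (B := fun _ => w r1) (B' := fun _ => 0)
      (fun x hx => (hwc x (hsub hx)).continuousWithinAt) le_rfl continuousOn_const
      (fun x hx => hasDerivWithinAt_const _ _ _)
      (fun x hx r hr => hslope x (hsub ⟨hx.1, hx.2.le⟩) r hr) ⟨h12, le_rfl⟩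
  refine AntitoneOn.concaveOn_of_deriv (convex_Icc 0 1)
    (fun x hx => (hσder x (hIJ hx)).continuousAt.continuousWithinAt)
    (fun x hx => (hσder x (hIJ (interior_subset hx))).differentiableAt.differentiableWithinAt) ?_
  intro r1 h1 r2 h2 h12
  rw [(hσder r1 (hIJ (interior_subset h1))).deriv, (hσder r2 (hIJ (interior_subset h2))).deriv]
  exact hanti (interior_subset h1) (interior_subset h2) h12

lemma local_convex {Y : Type*} [NormedAddCommGroup Y] [NormedSpace ℝ Y] (φ : Y → ℝ) (y0 : Y) (ε : ℝ)
    (hε : 0 < ε) (hd : ∀ z ∈ ball y0 ε, DifferentiableAt ℝ φ z) (L : NNReal)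
    (hL : LipschitzOnWith L (fderiv ℝ φ) (ball y0 ε)) (h0 : φ y0 = 0) (hne : fderiv ℝ φ y0 ≠ 0)
    (hcond : ∀ y ∈ ball y0 ε, φ y = 0 → ∀ k, fderiv ℝ φ y k = 0 → ∀ η > 0,
      ∃ᶠ t in 𝓝[>] (0:ℝ), -η < fderiv ℝ φ (y + t • k) k / t) :
    ∃ δ > 0, δ ≤ ε ∧ Convex ℝ ({y | φ y ≤ 0} ∩ ball y0 δ) := by
  obtain ⟨v, hv⟩ : ∃ v, fderiv ℝ φ y0 v = 1 := by
    obtain ⟨u, hu⟩ : ∃ u, fderiv ℝ φ y0 u ≠ 0 := by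
      by_contra hcon; push Not at hcon
      exact hne (ContinuousLinearMap.ext hcon)
    exact ⟨(fderiv ℝ φ y0 u)⁻¹ • u, by simp [hu]⟩
  have hcont : ContinuousAt (fderiv ℝ φ) y0 :=
    hL.continuousOn.continuousAt (isOpen_ball.mem_nhds (mem_ball_self hε))
  have ev1 : ∀ᶠ z in 𝓝 y0, 1 / 2 < fderiv ℝ φ z v :=
    (hcont.clm_apply continuousAt_const).eventually (lt_mem_nhds (show 1 / 2 < fderiv ℝ φ y0 v by rw [hv]; norm_num))
  set M := ‖fderiv ℝ φ y0‖ + 1 with hM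
  have hMpos : 0 < M := by positivity
  have ev2 : ∀ᶠ z in 𝓝 y0, ‖fderiv ℝ φ z‖ < M :=
    hcont.norm.eventually (gt_mem_nhds (by rw [hM]; linarith))
  obtain ⟨ε1, hε1, hb⟩ := Metric.eventually_nhds_iff_ball.1 ((ev1.and ev2).and (ball_mem_nhds y0 hε))
  set B := ball y0 ε1 with hBdef
  have hBε : B ⊆ ball y0 ε := fun z hz => (hb z hz).2
  have hvpos : v ≠ 0 := by rintro rfl; simp at hv
  have hvn : 0 < ‖v‖ := norm_pos_iff.2 hvpos
  set ρ := ε1 / (4 * ‖v‖) with hρ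
  have hρpos : 0 < ρ := by positivity
  have hρv : ρ * ‖v‖ = ε1 / 4 := by rw [hρ]; field_simp
  set δ := min (min ε (ε1 / 2)) (ρ / (4 * M)) with hδ
  have hδpos : 0 < δ := by positivity
  have hδ1 : δ ≤ ε1 / 2 := (min_le_left _ _).trans (min_le_right _ _)
  have hδ2 : M * δ ≤ ρ / 4 := by
    have : δ ≤ ρ / (4 * M) := min_le_right _ _
    rw [le_div_iff₀ (by positivity)] at this
    linarith
  have hin : ∀ q ∈ ball y0 δ, ∀ s : ℝ, |s| ≤ ρ → q + s • v ∈ B := by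
    intro q hq s hs
    rw [mem_ball, dist_eq_norm] at *
    have : q + s • v - y0 = (q - y0) + s • v := by abel
    rw [this]
    calc _ ≤ ‖q - y0‖ + ‖s • v‖ := norm_add_le _ _
      _ = ‖q - y0‖ + |s| * ‖v‖ := by rw [norm_smul, Real.norm_eq_abs]
      _ ≤ ‖q - y0‖ + ρ * ‖v‖ := by gcongr
      _ < ε1 := by rw [hρv]; linarith
  have hmono : ∀ q ∈ ball y0 δ, ∀ s ∈ Set.Icc (-ρ) ρ, ∀ s' ∈ Set.Icc (-ρ) ρ, s ≤ s' →
      1 / 2 * (s' - s) ≤ φ (q + s' • v) - φ (q + s • v) := by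
    intro q hq
    have hder : ∀ s ∈ Set.Icc (-ρ) ρ, HasDerivAt (fun s : ℝ => φ (q + s • v))
        (fderiv ℝ φ (q + s • v) v) s := by
      intro s hs
      have h1 : HasDerivAt (fun s : ℝ => q + s • v) v s := by
        simpa using ((hasDerivAt_id s).smul_const v).const_add q
      exact (hd _ (hBε (hin q hq s (abs_le.2 hs)))).hasFDerivAt.comp_hasDerivAt s h1
    refine Convex.mul_sub_le_image_sub_of_le_deriv (convex_Icc (-ρ) ρ)
      (f := fun s : ℝ => φ (q + s • v))
      (fun s hs => (hder s hs).continuousAt.continuousWithinAt)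
      (fun s hs => (hder s (interior_subset hs)).differentiableAt.differentiableWithinAt) ?_
    intro s hs
    have hs' : s ∈ Set.Icc (-ρ) ρ := interior_subset hs
    rw [(hder s hs').deriv]
    exact (hb _ (hin q hq s (abs_le.2 hs'))).1.1.le
  have hlip : ∀ p ∈ B, ∀ p' ∈ B, |φ p' - φ p| ≤ M * ‖p' - p‖ := by
    intro p hp p' hp'
    exact Convex.norm_image_sub_le_of_norm_fderiv_le (𝕜 := ℝ) (fun x hx => hd x (hBε hx))
      (fun x hx => (hb x hx).1.2.le) (convex_ball _ _) hp hp'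
  have hρm : ρ ∈ Set.Icc (-ρ) ρ := ⟨by linarith, le_rfl⟩
  have hρm' : -ρ ∈ Set.Icc (-ρ) ρ := ⟨le_rfl, by linarith⟩
  have h0m : (0:ℝ) ∈ Set.Icc (-ρ) ρ := ⟨by linarith, by linarith⟩
  have hy0 : y0 ∈ ball y0 δ := mem_ball_self hδpos
  have habsρ : |ρ| ≤ ρ := by rw [abs_of_pos hρpos]
  have habsρ' : |-ρ| ≤ ρ := by rw [abs_neg, abs_of_pos hρpos]
  have hex : ∀ q ∈ ball y0 δ, ∃ s ∈ Set.Icc (-ρ) ρ, φ (q + s • v) = 0 := by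
    intro q hq
    have hqd : ‖q - y0‖ < δ := by rwa [mem_ball, dist_eq_norm] at hq
    have hMq : M * ‖q - y0‖ ≤ ρ / 4 := le_trans (by gcongr) hδ2
    have a1 := hmono y0 hy0 0 h0m ρ hρm hρpos.le
    have a2 := hmono y0 hy0 (-ρ) hρm' 0 h0m (by linarith)
    have b1 := hlip _ (hin y0 hy0 ρ habsρ) _ (hin q hq ρ habsρ)
    have b2 := hlip _ (hin y0 hy0 (-ρ) habsρ') _ (hin q hq (-ρ) habsρ')
    rw [add_sub_add_right_eq_sub] at b1 b2
    simp only [zero_smul, add_zero, h0] at a1 a2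
    have c1 := (abs_le.1 b1).1
    have c2 := (abs_le.1 b2).2
    have hc : ContinuousOn (fun s : ℝ => φ (q + s • v)) (Set.Icc (-ρ) ρ) := by
      intro s hs
      have h1 : ContinuousAt φ (q + s • v) :=
        (hd _ (hBε (hin q hq s (abs_le.2 hs)))).continuousAt
      have h2 : ContinuousAt (fun s : ℝ => q + s • v) s := by fun_prop
      exact (ContinuousAt.comp (f := fun s : ℝ => q + s • v) h1 h2).continuousWithinAt
    have := intermediate_value_Icc (by linarith) hc (show (0:ℝ) ∈ _ from ⟨by linarith, by linarith⟩)
    obtain ⟨s, hs, hs'⟩ := this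
    exact ⟨s, hs, hs'⟩
  choose! S hS1 hS2 using hex
  have hSlip : ∀ q ∈ ball y0 δ, ∀ q' ∈ ball y0 δ, S q' - S q ≤ 2 * M * ‖q' - q‖ := by
    intro q hq q' hq'
    rcases le_total (S q') (S q) with h | h
    · have : 0 ≤ 2 * M * ‖q' - q‖ := by positivity
      linarith
    · have h1 := hmono q' hq' _ (hS1 q hq) _ (hS1 q' hq') h
      have h2 := hlip _ (hin q hq _ (abs_le.2 (hS1 q hq))) _ (hin q' hq' _ (abs_le.2 (hS1 q hq)))
      rw [add_sub_add_right_eq_sub, hS2 q hq] at h2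
      rw [hS2 q' hq'] at h1
      have := (abs_le.1 h2).1
      linarith
  refine ⟨δ, hδpos, (min_le_left _ _).trans (min_le_left _ _), ?_⟩
  have hSsign : ∀ q ∈ ball y0 δ, (φ q ≤ 0 ↔ 0 ≤ S q) := by
    intro q hq
    constructor
    · intro h
      by_contra hneg
      push Not at hneg
      have := hmono q hq _ (hS1 q hq) 0 h0m hneg.le
      rw [hS2 q hq] at this
      simp only [zero_smul, add_zero] at this
      linarith
    · intro h
      have := hmono q hq 0 h0m _ (hS1 q hq) h
      rw [hS2 q hq] at this
      simp only [zero_smul, add_zero] at this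
      linarith
  rw [convex_iff_segment_subset]
  rintro a ⟨ha, haB⟩ b ⟨hb', hbB⟩
  rw [segment_eq_image']
  rintro _ ⟨r, hr, rfl⟩
  set k := b - a with hk
  have hIn : ∀ r ∈ Set.Icc (0:ℝ) 1, a + r • k ∈ ball y0 δ := by
    intro r hr
    have := (convex_ball y0 δ).segment_subset haB hbB
    rw [segment_eq_image'] at this
    exact this ⟨r, hr, rfl⟩
  have hcc := curve_concave φ B isOpen_ball (fun z hz => hd z (hBε hz)) L (hL.mono hBε) v
    (fun z hz => (hb z hz).1.1.le) (fun y hy => hcond y (hBε hy)) a k (fun r => S (a + r • k))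
    ((fun r : ℝ => a + r • k) ⁻¹' ball y0 δ) (isOpen_ball.preimage (by fun_prop)) hIn
    (fun r hr => hin _ hr _ (abs_le.2 (hS1 _ hr))) (fun r hr => hS2 _ hr) (2 * M * ‖k‖)
    (by
      intro r hr r' hr'
      have e1 : ‖(a + r' • k) - (a + r • k)‖ = ‖k‖ * |r' - r| := by
        rw [add_sub_add_left_eq_sub, ← sub_smul, norm_smul, mul_comm, Real.norm_eq_abs]
      have h1 := hSlip _ hr _ hr'
      have h2 := hSlip _ hr' _ hr
      rw [norm_sub_rev] at h2
      rw [e1] at h1 h2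
      rw [abs_le]
      constructor <;> nlinarith)
  refine ⟨?_, hIn r hr⟩
  change φ (a + r • k) ≤ 0
  rw [hSsign _ (hIn r hr)]
  have h1 := hcc.2 (show (0:ℝ) ∈ Set.Icc (0:ℝ) 1 by simp) (show (1:ℝ) ∈ Set.Icc (0:ℝ) 1 by simp)
    (show 0 ≤ 1 - r by linarith [hr.2]) hr.1 (by ring)
  simp only [smul_eq_mul, mul_zero, mul_one, zero_add, zero_smul, add_zero, one_smul] at h1
  have e : a + k = b := by rw [hk]; abel
  rw [e] at h1
  have s1 := (hSsign a haB).1 ha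
  have s2 := (hSsign b hbB).1 hb'
  have : 0 ≤ (1 - r) * S a + r * S b := by
    have := hr.1; have := hr.2
    have : 0 ≤ 1 - r := by linarith
    positivity
  linarith

lemma support_ineq {Y : Type*} [NormedAddCommGroup Y] [NormedSpace ℝ Y] (φ : Y → ℝ) (K : Set Y)
    (hK : Convex ℝ K) (z : Y) (hz : z ∈ K) (hφ : ∀ᶠ y in 𝓝 z, y ∈ K → φ y ≤ 0) (h0 : φ z = 0)
    (hd : DifferentiableAt ℝ φ z) (y' : Y) (hy' : y' ∈ K) : fderiv ℝ φ z (y' - z) ≤ 0 := by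
  refine IsLocalMaxOn.hasFDerivWithinAt_nonpos (s := K) (a := z) (f := φ) ?_
    hd.hasFDerivAt.hasFDerivWithinAt (mem_posTangentConeAt_of_segment_subset ?_)
  · rw [IsLocalMaxOn, IsMaxFilter, eventually_nhdsWithin_iff, h0]
    exact hφ
  · rw [add_sub_cancel]
    exact hK.segment_subset hz hy'

lemma ev_neg (f : ℝ → ℝ) (f' : ℝ) (hf : HasDerivAt f f' 0) (h0 : f 0 = 0) (hf' : f' < 0) :
    ∀ᶠ t in 𝓝[>] (0:ℝ), f t < 0 := by
  have h1 := hasDerivAt_iff_tendsto_slope.1 hf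
  have h2 := (h1.eventually (gt_mem_nhds hf')).filter_mono
    (nhdsWithin_mono (0:ℝ) (fun t (ht : 0 < t) => ht.ne') : 𝓝[>] (0:ℝ) ≤ 𝓝[≠] 0)
  filter_upwards [h2, self_mem_nhdsWithin] with t ht ht0
  rw [slope_def_field, h0, sub_zero, sub_zero] at ht
  have ht0' : 0 < t := ht0
  rw [div_lt_iff₀ ht0', zero_mul] at ht
  exact ht

lemma exists_one {Y : Type*} [NormedAddCommGroup Y] [NormedSpace ℝ Y] (l : Y →L[ℝ] ℝ) (h : l ≠ 0) :
    ∃ v, l v = 1 := by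
  obtain ⟨u, hu⟩ : ∃ u, l u ≠ 0 := by
    by_contra hcon; push Not at hcon
    exact h (ContinuousLinearMap.ext hcon)
  exact ⟨(l u)⁻¹ • u, by simp [hu]⟩

lemma nec {Y : Type*} [NormedAddCommGroup Y] [NormedSpace ℝ Y] (φ : Y → ℝ) (K : Set Y)
    (hK : Convex ℝ K) (y : Y) (ε : ℝ) (hε : 0 < ε)
    (hd : ∀ z ∈ ball y ε, DifferentiableAt ℝ φ z) (L : NNReal)
    (hL : LipschitzOnWith L (fderiv ℝ φ) (ball y ε)) (hKφ : ∀ z ∈ ball y ε, (z ∈ K ↔ φ z ≤ 0))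
    (h0 : φ y = 0) (hne : fderiv ℝ φ y ≠ 0) (k : Y) (hk : fderiv ℝ φ y k = 0) (η : ℝ) (hη : 0 < η) :
    ∀ᶠ t in 𝓝[>] (0:ℝ), -η ≤ fderiv ℝ φ (y + t • k) k / t := by
  obtain ⟨v, hv⟩ := exists_one _ hne
  have hcont : ContinuousAt (fderiv ℝ φ) y :=
    hL.continuousOn.continuousAt (isOpen_ball.mem_nhds (mem_ball_self hε))
  have ev1 : ∀ᶠ z in 𝓝 y, 0 < fderiv ℝ φ z v :=
    (hcont.clm_apply continuousAt_const).eventually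
      (lt_mem_nhds (show 0 < fderiv ℝ φ y v by rw [hv]; norm_num))
  obtain ⟨ε1, hε1, hb⟩ := Metric.eventually_nhds_iff_ball.1 (ev1.and (ball_mem_nhds y hε))
  set η' := η / (L * ‖v‖ * ‖k‖ + 1) with hη'
  have hη'pos : 0 < η' := by positivity
  have hη'1 : L * ‖v‖ * ‖k‖ * η' ≤ η := by
    rw [hη', mul_div_assoc', div_le_iff₀ (by positivity)]
    nlinarith
  have hder : ∀ u : Y, HasDerivAt (fun t : ℝ => φ (y + t • u)) (fderiv ℝ φ y u) 0 := by
    intro u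
    have h1 : HasDerivAt (fun s : ℝ => y + s • u) u 0 := by
      simpa using ((hasDerivAt_id (0:ℝ)).smul_const u).const_add y
    have h2 : HasFDerivAt φ (fderiv ℝ φ y) (y + (0:ℝ) • u) := by
      simpa using (hd y (mem_ball_self hε)).hasFDerivAt
    exact h2.comp_hasDerivAt (0:ℝ) h1
  have evA := ev_neg (fun t : ℝ => φ (y + t • (k - η' • v))) _ (hder _) (by simp [h0])
    (by simp [hk, hv, hη'pos])
  have evB := ev_neg (fun t : ℝ => -φ (y + t • (k + η' • v))) _ (hder _).neg (by simp [h0])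
    (by simp [hk, hv, hη'pos])
  have hR : 0 < ‖k‖ + η' * ‖v‖ + 1 := by positivity
  have evC : ∀ᶠ t in 𝓝[>] (0:ℝ), t < ε1 / (‖k‖ + η' * ‖v‖ + 1) :=
    nhdsWithin_le_nhds (gt_mem_nhds (by positivity))
  filter_upwards [evA, evB, evC, self_mem_nhdsWithin] with t hA hB hC ht0
  have ht : 0 < t := ht0
  rw [lt_div_iff₀ hR] at hC
  have hin : ∀ s : ℝ, |s| ≤ η' * t → y + t • k - s • v ∈ ball y ε1 := by
    intro s hs
    rw [mem_ball, dist_eq_norm]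
    have : y + t • k - s • v - y = t • k - s • v := by abel
    rw [this]
    calc _ ≤ ‖t • k‖ + ‖s • v‖ := norm_sub_le _ _
      _ = t * ‖k‖ + |s| * ‖v‖ := by
        rw [norm_smul, norm_smul, Real.norm_eq_abs, Real.norm_eq_abs, abs_of_pos ht]
      _ ≤ t * ‖k‖ + (η' * t) * ‖v‖ := by gcongr
      _ < ε1 := by linarith
  have hbε : ∀ z ∈ ball y ε1, z ∈ ball y ε := fun z hz => (hb z hz).2
  have hηt : 0 < η' * t := by positivity
  have hc : ContinuousOn (fun s : ℝ => φ (y + t • k - s • v)) (Set.Icc (-(η' * t)) (η' * t)) := by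
    intro s hs
    have h1 : ContinuousAt φ (y + t • k - s • v) :=
      (hd _ (hbε _ (hin s (abs_le.2 hs)))).continuousAt
    have h2 : ContinuousAt (fun s : ℝ => y + t • k - s • v) s := by fun_prop
    exact (ContinuousAt.comp (f := fun s : ℝ => y + t • k - s • v) h1 h2).continuousWithinAt
  have hivt := intermediate_value_Icc' (by linarith) hc
  obtain ⟨s, hs, hs0⟩ := hivt (show (0:ℝ) ∈ _ from by
    constructor
    · have e : y + t • k - (η' * t) • v = y + t • (k - η' • v) := by module
      simp only [e]; exact hA.le
    · have e : y + t • k - (-(η' * t)) • v = y + t • (k + η' • v) := by module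
      simp only [e]; linarith)
  set z := y + t • k - s • v with hz
  have hs0 : φ z = 0 := hs0
  have hzb := hin s (abs_le.2 hs)
  have hzε := hbε z hzb
  have hzK : z ∈ K := (hKφ z hzε).2 hs0.le
  have hyε := mem_ball_self (x := y) hε
  have hyK : y ∈ K := (hKφ y hyε).2 h0.le
  have hev : ∀ p ∈ ball y ε, ∀ᶠ q in 𝓝 p, q ∈ K → φ q ≤ 0 := by
    intro p hp
    filter_upwards [isOpen_ball.mem_nhds hp] with q hq hqK
    exact (hKφ q hq).1 hqK
  have s1 := support_ineq φ K hK z hzK (hev z hzε) hs0 (hd z hzε) y hyK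
  have s2 := support_ineq φ K hK y hyK (hev y hyε) h0 (hd y hyε) z hzK
  have e1 : y - z = s • v - t • k := by rw [hz]; abel
  have e2 : z - y = t • k - s • v := by rw [hz]; abel
  rw [e1] at s1
  rw [e2] at s2
  simp only [map_sub, map_smul, smul_eq_mul, hk, hv] at s1 s2
  have hs_nonneg : 0 ≤ s := by linarith
  have hvz := (hb z hzb).1
  have hkz : 0 ≤ fderiv ℝ φ z k := by
    by_contra hneg
    push Not at hneg
    nlinarith [mul_nonneg hs_nonneg hvz.le, mul_neg_of_pos_of_neg ht hneg]
  have hytk : y + t • k ∈ ball y ε := by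
    have := hin 0 (by simpa using hηt.le)
    rw [zero_smul, sub_zero] at this
    exact hbε _ this
  have hfin : |fderiv ℝ φ (y + t • k) k - fderiv ℝ φ z k| ≤ η * t := by
    calc |fderiv ℝ φ (y + t • k) k - fderiv ℝ φ z k|
        = ‖(fderiv ℝ φ (y + t • k) - fderiv ℝ φ z) k‖ := rfl
      _ ≤ ‖fderiv ℝ φ (y + t • k) - fderiv ℝ φ z‖ * ‖k‖ := ContinuousLinearMap.le_opNorm _ _
      _ ≤ (L * ‖y + t • k - z‖) * ‖k‖ := by
        gcongr; exact hL.norm_sub_le hytk hzε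
      _ = (L * (s * ‖v‖)) * ‖k‖ := by
        have : y + t • k - z = s • v := by rw [hz]; abel
        rw [this, norm_smul, Real.norm_of_nonneg hs_nonneg]
      _ ≤ (L * ((η' * t) * ‖v‖)) * ‖k‖ := by gcongr; exact hs.2
      _ = (L * ‖v‖ * ‖k‖ * η') * t := by ring
      _ ≤ η * t := by gcongr
  rw [le_div_iff₀ ht]
  have := (abs_le.1 hfin).1
  linarith

/-- `C^{1,1}` near a point. -/
def LC11 {X Y : Type*} [NormedAddCommGroup X] [NormedSpace ℝ X] [NormedAddCommGroup Y]
    [NormedSpace ℝ Y] (f : X → Y) (x : X) : Prop :=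
  ∃ ε > 0, ∃ L : NNReal, (∀ z ∈ ball x ε, DifferentiableAt ℝ f z) ∧
    LipschitzOnWith L (fderiv ℝ f) (ball x ε)

lemma LC11.contAt {X Y : Type*} [NormedAddCommGroup X] [NormedSpace ℝ X] [NormedAddCommGroup Y]
    [NormedSpace ℝ Y] {f : X → Y} {x : X} (h : LC11 f x) : ContinuousAt (fderiv ℝ f) x := by
  obtain ⟨ε, hε, L, _, hL⟩ := h
  exact hL.continuousOn.continuousAt (isOpen_ball.mem_nhds (mem_ball_self hε))

lemma LC11.diffEv {X Y : Type*} [NormedAddCommGroup X] [NormedSpace ℝ X] [NormedAddCommGroup Y]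
    [NormedSpace ℝ Y] {f : X → Y} {x : X} (h : LC11 f x) : ∀ᶠ z in 𝓝 x, DifferentiableAt ℝ f z := by
  obtain ⟨ε, hε, L, hd, hL⟩ := h
  filter_upwards [ball_mem_nhds x hε] with z hz using hd z hz

lemma LC11.comp {X Y Z : Type*} [NormedAddCommGroup X] [NormedSpace ℝ X] [NormedAddCommGroup Y]
    [NormedSpace ℝ Y] [NormedAddCommGroup Z] [NormedSpace ℝ Z] {f : X → Y} {g : Y → Z} {x : X}
    (hg : LC11 g (f x)) (hf : LC11 f x) : LC11 (fun z => g (f z)) x := by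
  have hfc := hf.contAt
  have hgc := hg.contAt
  have hfcont : ContinuousAt f x := hf.diffEv.self_of_nhds.continuousAt
  have hgfc : ContinuousAt (fun z => fderiv ℝ g (f z)) x :=
    ContinuousAt.comp (f := f) (g := fderiv ℝ g) hgc hfcont
  obtain ⟨ε1, hε1, L1, hd1, hL1⟩ := hg
  obtain ⟨ε2, hε2, L2, hd2, hL2⟩ := hf
  set M1 := ‖fderiv ℝ f x‖ + 1 with hM1
  set M2 := ‖fderiv ℝ g (f x)‖ + 1 with hM2
  have ev1 : ∀ᶠ z in 𝓝 x, ‖fderiv ℝ f z‖ < M1 :=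
    hfc.norm.eventually (gt_mem_nhds (by rw [hM1]; linarith))
  have ev2 : ∀ᶠ z in 𝓝 x, ‖fderiv ℝ g (f z)‖ < M2 :=
    hgfc.norm.eventually (gt_mem_nhds (by rw [hM2]; linarith))
  have ev3 : ∀ᶠ z in 𝓝 x, f z ∈ ball (f x) ε1 := hfcont.eventually (ball_mem_nhds _ hε1)
  obtain ⟨ε, hε, hb⟩ := Metric.eventually_nhds_iff_ball.1
    ((ev1.and ev2).and (ev3.and (ball_mem_nhds x hε2)))
  have hM1p : 0 ≤ M1 := by positivity
  have hM2p : 0 ≤ M2 := by positivity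
  have hder : ∀ z ∈ ball x ε, HasFDerivAt (fun z => g (f z)) ((fderiv ℝ g (f z)).comp (fderiv ℝ f z)) z := by
    intro z hz
    exact (hd1 _ (hb z hz).2.1).hasFDerivAt.comp z (hd2 z (hb z hz).2.2).hasFDerivAt
  refine ⟨ε, hε, Real.toNNReal (L1 * M1 * M1 + M2 * L2), fun z hz => (hder z hz).differentiableAt, ?_⟩
  refine LipschitzOnWith.of_dist_le_mul fun z hz z' hz' => ?_
  rw [(hder z hz).fderiv, (hder z' hz').fderiv, dist_eq_norm, dist_eq_norm,
    Real.coe_toNNReal _ (by positivity)]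
  have e : (fderiv ℝ g (f z)).comp (fderiv ℝ f z) - (fderiv ℝ g (f z')).comp (fderiv ℝ f z')
      = (fderiv ℝ g (f z) - fderiv ℝ g (f z')).comp (fderiv ℝ f z)
        + (fderiv ℝ g (f z')).comp (fderiv ℝ f z - fderiv ℝ f z') := by
    ext u; simp
  rw [e]
  have hlip : ‖f z - f z'‖ ≤ M1 * ‖z - z'‖ :=
    Convex.norm_image_sub_le_of_norm_fderiv_le (𝕜 := ℝ) (fun p hp => hd2 p (hb p hp).2.2)
      (fun p hp => (hb p hp).1.1.le) (convex_ball x ε) hz' hz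
  calc _ ≤ ‖(fderiv ℝ g (f z) - fderiv ℝ g (f z')).comp (fderiv ℝ f z)‖
        + ‖(fderiv ℝ g (f z')).comp (fderiv ℝ f z - fderiv ℝ f z')‖ := norm_add_le _ _
    _ ≤ ‖fderiv ℝ g (f z) - fderiv ℝ g (f z')‖ * ‖fderiv ℝ f z‖
        + ‖fderiv ℝ g (f z')‖ * ‖fderiv ℝ f z - fderiv ℝ f z'‖ :=
      add_le_add (ContinuousLinearMap.opNorm_comp_le _ _) (ContinuousLinearMap.opNorm_comp_le _ _)
    _ ≤ (L1 * (M1 * ‖z - z'‖)) * M1 + M2 * (L2 * ‖z - z'‖) := by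
      have a1 := hL1.norm_sub_le (hb z hz).2.1 (hb z' hz').2.1
      have a2 := hL2.norm_sub_le (hb z hz).2.2 (hb z' hz').2.2
      have a3 : ‖fderiv ℝ g (f z) - fderiv ℝ g (f z')‖ ≤ L1 * (M1 * ‖z - z'‖) :=
        a1.trans (by gcongr)
      have a4 := (hb z hz).1.1.le
      have a5 := (hb z' hz').1.2.le
      gcongr
    _ = _ := by ring

/-- second-order difference quotient -/
noncomputable def QQ {X : Type*} [NormedAddCommGroup X] [NormedSpace ℝ X]
    (f : X → ℝ) (x h : X) (t : ℝ) : ℝ := (fderiv ℝ f (x + t • h) h - fderiv ℝ f x h) / t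

lemma line_tendsto {X : Type*} [NormedAddCommGroup X] [NormedSpace ℝ X] (x h : X) :
    Tendsto (fun t : ℝ => x + t • h) (𝓝[≠] 0) (𝓝 x) := by
  have : Continuous fun t : ℝ => x + t • h := by fun_prop
  have := this.tendsto 0
  simp only [zero_smul, add_zero] at this
  exact this.mono_left nhdsWithin_le_nhds

lemma QQ_bdd {X : Type*} [NormedAddCommGroup X] [NormedSpace ℝ X]
    {f : X → ℝ} {x : X} (hf : LC11 f x) (h : X) : ∃ C, ∀ᶠ t in 𝓝[≠] (0:ℝ), |QQ f x h t| ≤ C := by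
  obtain ⟨ε, hε, L, hd, hL⟩ := hf
  refine ⟨L * ‖h‖ * ‖h‖, ?_⟩
  filter_upwards [(line_tendsto x h).eventually (ball_mem_nhds x hε), self_mem_nhdsWithin] with t ht ht0
  have ht0' : 0 < |t| := abs_pos.2 ht0
  rw [QQ, abs_div, div_le_iff₀ ht0']
  calc |fderiv ℝ f (x + t • h) h - fderiv ℝ f x h| = ‖(fderiv ℝ f (x + t • h) - fderiv ℝ f x) h‖ := rfl
    _ ≤ ‖fderiv ℝ f (x + t • h) - fderiv ℝ f x‖ * ‖h‖ := ContinuousLinearMap.le_opNorm _ _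
    _ ≤ (L * ‖x + t • h - x‖) * ‖h‖ := by gcongr; exact hL.norm_sub_le ht (mem_ball_self hε)
    _ = _ := by rw [add_sub_cancel_left, norm_smul, Real.norm_eq_abs]; ring

lemma QQ_transfer {X Y : Type*} [NormedAddCommGroup X] [NormedSpace ℝ X] [NormedAddCommGroup Y]
    [NormedSpace ℝ Y] (F : X → Y) (φ : Y → ℝ) (g : X → ℝ) (x : X) (hF : LC11 F x) (hφ : LC11 φ (F x))
    (hg : ∀ᶠ z in 𝓝 x, g z = φ (F z)) (h : X) :
    Tendsto (fun t => QQ g x h t - QQ (fun z => fderiv ℝ φ (F x) (F z)) x h t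
      - QQ φ (F x) (fderiv ℝ F x h) t) (𝓝[≠] 0) (𝓝 0) := by
  have hFc := hF.contAt
  have hFd := hF.diffEv
  have hFcont : ContinuousAt F x := hFd.self_of_nhds.continuousAt
  have hφd := hφ.diffEv
  have hφF : ∀ᶠ z in 𝓝 x, DifferentiableAt ℝ φ (F z) := hFcont.eventually hφd
  obtain ⟨ε, hε, L, hd, hL⟩ := hφ
  set y := F x with hy
  set k := fderiv ℝ F x h with hk
  set l := fderiv ℝ φ y with hl
  have hball : ∀ᶠ z in 𝓝 x, F z ∈ ball y ε := hFcont.eventually (ball_mem_nhds _ hε)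
  have hgder : ∀ᶠ z in 𝓝 x, fderiv ℝ g z = (fderiv ℝ φ (F z)).comp (fderiv ℝ F z) := by
    filter_upwards [hg.eventually_nhds, hFd, hφF] with z h1 h2 h3
    have : g =ᶠ[𝓝 z] fun z => φ (F z) := h1
    rw [this.fderiv_eq]
    exact (h3.hasFDerivAt.comp z h2.hasFDerivAt).fderiv
  have hlder : ∀ᶠ z in 𝓝 x, fderiv ℝ (fun z => l (F z)) z = l.comp (fderiv ℝ F z) := by
    filter_upwards [hFd] with z h2
    exact (l.hasFDerivAt.comp z h2.hasFDerivAt).fderiv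
  have hlt := line_tendsto x h
  have hpath : HasDerivAt (fun t : ℝ => F (x + t • h)) k 0 := by
    have h1 : HasDerivAt (fun s : ℝ => x + s • h) h 0 := by
      simpa using ((hasDerivAt_id (0:ℝ)).smul_const h).const_add x
    have h2 : HasFDerivAt F (fderiv ℝ F x) (x + (0:ℝ) • h) := by
      simpa using hFd.self_of_nhds.hasFDerivAt
    exact h2.comp_hasDerivAt (0:ℝ) h1
  have ho : (fun t : ℝ => F (x + t • h) - (y + t • k)) =o[𝓝[≠] 0] (fun t : ℝ => t) := by
    have := hasDerivAt_iff_isLittleO_nhds_zero.1 hpath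
    refine (this.mono nhdsWithin_le_nhds).congr_left ?_
    intro t; simp only [zero_add, zero_smul, add_zero, ← hy]; abel
  have hO : (fun t : ℝ => F (x + t • h) - y) =O[𝓝[≠] 0] (fun t : ℝ => t) := by
    have h2 : (fun t : ℝ => t • k) =O[𝓝[≠] 0] (fun t : ℝ => t) :=
      Asymptotics.IsBigO.of_bound ‖k‖ (Eventually.of_forall fun t => by rw [norm_smul, mul_comm])
    refine (ho.isBigO.add h2).congr_left ?_
    intro t; abel
  have hP : Tendsto (fun t : ℝ => fderiv ℝ F (x + t • h) h - k) (𝓝[≠] 0) (𝓝 0) := by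
    have h1 : Tendsto (fun t : ℝ => fderiv ℝ F (x + t • h) h) (𝓝[≠] 0) (𝓝 k) :=
      ((hFc.clm_apply continuousAt_const).tendsto (x := x)).comp hlt
    simpa using h1.sub_const k
  have hev : ∀ᶠ t in 𝓝[≠] (0:ℝ), F (x + t • h) ∈ ball y ε := hlt.eventually hball
  have hev2 : ∀ᶠ t in 𝓝[≠] (0:ℝ), y + t • k ∈ ball y ε :=
    (line_tendsto y k).eventually (ball_mem_nhds y hε)
  -- numerator pieces
  have A1 : (fun t : ℝ => (fderiv ℝ φ (F (x + t • h)) - l) (fderiv ℝ F (x + t • h) h - k))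
      =o[𝓝[≠] 0] (fun t : ℝ => t) := by
    have B1 : (fun t : ℝ => fderiv ℝ φ (F (x + t • h)) - l) =O[𝓝[≠] 0] (fun t : ℝ => t) := by
      refine Asymptotics.IsBigO.trans (Asymptotics.IsBigO.of_bound L ?_) hO
      filter_upwards [hev] with t ht
      exact hL.norm_sub_le ht (mem_ball_self hε)
    have B2 : (fun t : ℝ => fderiv ℝ F (x + t • h) h - k) =o[𝓝[≠] 0] (fun _ : ℝ => (1:ℝ)) :=
      (Asymptotics.isLittleO_one_iff ℝ).2 hP
    have B3 := B1.norm_left.mul_isLittleO B2.norm_left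
    simp only [mul_one] at B3
    refine Asymptotics.IsBigO.trans_isLittleO (Asymptotics.IsBigO.of_bound 1 (Eventually.of_forall fun t => ?_)) B3
    rw [one_mul, norm_mul, norm_norm, norm_norm]
    exact ContinuousLinearMap.le_opNorm _ _
  have A2 : (fun t : ℝ => (fderiv ℝ φ (F (x + t • h)) - fderiv ℝ φ (y + t • k)) k)
      =o[𝓝[≠] 0] (fun t : ℝ => t) := by
    refine Asymptotics.IsBigO.trans_isLittleO (Asymptotics.IsBigO.of_bound (L * ‖k‖) ?_) ho
    filter_upwards [hev, hev2] with t h1 h2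
    calc _ ≤ ‖fderiv ℝ φ (F (x + t • h)) - fderiv ℝ φ (y + t • k)‖ * ‖k‖ := ContinuousLinearMap.le_opNorm _ _
      _ ≤ (L * ‖F (x + t • h) - (y + t • k)‖) * ‖k‖ := by gcongr; exact hL.norm_sub_le h1 h2
      _ = _ := by ring
  refine (A1.add A2).tendsto_div_nhds_zero.congr' ?_
  filter_upwards [hlt.eventually hgder, hlt.eventually hlder] with t h1 h2
  have h3 := hgder.self_of_nhds
  have h4 := hlder.self_of_nhds
  simp only [QQ]
  rw [h1, h2, h3, h4]
  simp only [ContinuousLinearMap.comp_apply, map_sub, sub_apply, ← hk, ← hl, ← hy]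
  ring

lemma lim_le_of {l : Filter ℝ} [l.NeBot] (a q : ℝ → ℝ) (C C' : ℝ) (ha : ∀ᶠ t in l, |a t| ≤ C)
    (hq : ∀ᶠ t in l, |q t| ≤ C') (h : ∀ η > 0, ∀ᶠ t in l, -η ≤ q t - a t) :
    liminf a l ≤ liminf q l ∧ limsup a l ≤ limsup q l := by
  have a1 : IsBoundedUnder (· ≤ ·) l a := ⟨C, eventually_map.2 (ha.mono fun t ht => (abs_le.1 ht).2)⟩
  have a2 : IsBoundedUnder (· ≥ ·) l a := ⟨-C, eventually_map.2 (ha.mono fun t ht => (abs_le.1 ht).1)⟩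
  have q1 : IsBoundedUnder (· ≤ ·) l q := ⟨C', eventually_map.2 (hq.mono fun t ht => (abs_le.1 ht).2)⟩
  have q2 : IsBoundedUnder (· ≥ ·) l q := ⟨-C', eventually_map.2 (hq.mono fun t ht => (abs_le.1 ht).1)⟩
  have key : ∀ η > 0, ∀ᶠ t in l, a t ≤ q t + η := fun η hη => (h η hη).mono fun t ht => by linarith
  constructor
  · refine le_of_forall_pos_le_add fun η hη => ?_
    rw [← liminf_add_const l q η q1.isCoboundedUnder_ge q2]
    refine liminf_le_liminf (key η hη) a2 ?_
    exact IsBoundedUnder.isCoboundedUnder_ge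
      ⟨C' + η, eventually_map.2 (hq.mono fun t ht => by linarith [(abs_le.1 ht).2])⟩
  · refine le_of_forall_pos_le_add fun η hη => ?_
    rw [← limsup_add_const l q η q1 q2.isCoboundedUnder_le]
    refine limsup_le_limsup (key η hη) a2.isCoboundedUnder_le ?_
    exact ⟨C' + η, eventually_map.2 (hq.mono fun t ht => by linarith [(abs_le.1 ht).2])⟩

lemma freq_of_lim {l : Filter ℝ} [l.NeBot] (a q : ℝ → ℝ) (C C' : ℝ) (ha : ∀ᶠ t in l, |a t| ≤ C)
    (hq : ∀ᶠ t in l, |q t| ≤ C') (h : liminf a l ≤ liminf q l ∨ limsup a l ≤ limsup q l)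
    (η : ℝ) (hη : 0 < η) : ∃ᶠ t in l, -η < q t - a t := by
  by_contra hcon
  rw [not_frequently] at hcon
  have hq' : ∀ᶠ t in l, |q t + η| ≤ C' + η := hq.mono fun t ht => by
    rw [abs_le] at *; constructor <;> linarith [ht.1, ht.2]
  have h1 := lim_le_of (fun t => q t + η) a (C' + η) C hq' ha (fun η' hη' => by
    filter_upwards [hcon] with t ht
    linarith)
  have q1 : IsBoundedUnder (· ≤ ·) l q := ⟨C', eventually_map.2 (hq.mono fun t ht => (abs_le.1 ht).2)⟩
  have q2 : IsBoundedUnder (· ≥ ·) l q := ⟨-C', eventually_map.2 (hq.mono fun t ht => (abs_le.1 ht).1)⟩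
  rw [liminf_add_const l q η q1.isCoboundedUnder_ge q2, limsup_add_const l q η q1 q2.isCoboundedUnder_le] at h1
  rcases h with h | h
  · linarith [h1.1]
  · linarith [h1.2]

lemma LC11_clm {X Y : Type*} [NormedAddCommGroup X] [NormedSpace ℝ X] [NormedAddCommGroup Y]
    [NormedSpace ℝ Y] (l : X →L[ℝ] Y) (x : X) : LC11 (fun z => l z) x := by
  refine ⟨1, one_pos, 0, fun z _ => l.differentiableAt, ?_⟩
  refine LipschitzOnWith.of_dist_le_mul fun z hz z' hz' => ?_
  simp

lemma LC11_of {X Y : Type*} [NormedAddCommGroup X] [NormedSpace ℝ X] [NormedAddCommGroup Y]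
    [NormedSpace ℝ Y] {F : X → Y} {U : Set X} (hU : IsOpen U) (hF : ContDiffOn ℝ 1 F U) {x : X}
    (hx : x ∈ U) (hL : ∃ ε > 0, ∃ L : NNReal, LipschitzOnWith L (fun y => fderiv ℝ F y) (ball x ε ∩ U)) :
    LC11 F x := by
  obtain ⟨ε, hε, L, hL⟩ := hL
  obtain ⟨ε', hε', hb⟩ := Metric.isOpen_iff.1 hU x hx
  refine ⟨min ε ε', lt_min hε hε', L, fun z hz => ?_, hL.mono fun z hz => ?_⟩
  · have hzU : z ∈ U := hb (ball_subset_ball (min_le_right _ _) hz)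
    exact (hF.differentiableOn one_ne_zero).differentiableAt (hU.mem_nhds hzU)
  · exact ⟨ball_subset_ball (min_le_left _ _) hz, hb (ball_subset_ball (min_le_right _ _) hz)⟩

lemma QQ_neg {X : Type*} [NormedAddCommGroup X] [NormedSpace ℝ X] (f : X → ℝ) (x h : X) (t : ℝ) :
    QQ f x h t = QQ f x (-h) (-t) := by
  simp only [QQ, smul_neg, neg_smul, neg_neg, map_neg, div_neg]
  ring

lemma gt_le_ne : 𝓝[>] (0:ℝ) ≤ 𝓝[≠] 0 := nhdsWithin_mono (0:ℝ) (fun t (ht : 0 < t) => ht.ne')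
lemma lt_le_ne : 𝓝[<] (0:ℝ) ≤ 𝓝[≠] 0 := nhdsWithin_mono (0:ℝ) (fun t (ht : t < 0) => ht.ne)

lemma map_neg_lt : 𝓝[<] (0:ℝ) = map (fun t => -t) (𝓝[>] (0:ℝ)) := by
  have h := (Homeomorph.neg ℝ).isEmbedding.map_nhdsWithin_eq (Set.Ioi 0) 0
  have e1 : (Homeomorph.neg ℝ) '' (Set.Ioi 0) = Set.Iio 0 := by
    change (fun t : ℝ => -t) '' Set.Ioi 0 = _
    simp
  have e2 : (Homeomorph.neg ℝ) 0 = 0 := by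
    change -(0:ℝ) = 0
    simp
  rw [e1, e2] at h
  exact h.symm

/-- Everything about one boundary point. -/
lemma point_facts {X Y : Type*} [NormedAddCommGroup X] [NormedSpace ℝ X] [NormedAddCommGroup Y]
    [NormedSpace ℝ Y] (F : X → Y) (φ : Y → ℝ) (g : X → ℝ) (x : X) (hF : LC11 F x) (hφ : LC11 φ (F x))
    (hg : ∀ᶠ z in 𝓝 x, g z = φ (F z)) (hgx : LC11 g x)
    (D : (X → ℝ) → X → X → X → ℝ)
    (hD : D = lowD2p ∨ D = upD2p ∨ D = lowD2m ∨ D = upD2m) (h : X) :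
    ((∀ η > 0, ∀ᶠ t in 𝓝[≠] (0:ℝ), -η ≤ QQ φ (F x) (fderiv ℝ F x h) t) →
      D (fun z => fderiv ℝ φ (F x) (F z)) x h h ≤ D g x h h) ∧
    (D (fun z => fderiv ℝ φ (F x) (F z)) x h h ≤ D g x h h → ∀ η > 0,
      ((D = lowD2p ∨ D = upD2p) → ∃ᶠ t in 𝓝[>] (0:ℝ), -η < QQ φ (F x) (fderiv ℝ F x h) t) ∧
      ((D = lowD2m ∨ D = upD2m) → ∃ᶠ t in 𝓝[<] (0:ℝ), -η < QQ φ (F x) (fderiv ℝ F x h) t)) := by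
  have hT := QQ_transfer F φ g x hF hφ hg h
  obtain ⟨C, hC⟩ := QQ_bdd hgx h
  have hl : LC11 (fun z => fderiv ℝ φ (F x) (F z)) x :=
    LC11.comp (g := fun w => fderiv ℝ φ (F x) w) (LC11_clm _ _) hF
  obtain ⟨C', hC'⟩ := QQ_bdd hl h
  set a := QQ (fun z => fderiv ℝ φ (F x) (F z)) x h with ha
  set q := QQ g x h with hq
  set b := QQ φ (F x) (fderiv ℝ F x h) with hb
  constructor
  · intro hb0
    have hqa : ∀ η > 0, ∀ᶠ t in 𝓝[≠] (0:ℝ), -η ≤ q t - a t := by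
      intro η hη
      filter_upwards [hb0 (η / 2) (by positivity),
        hT.eventually (lt_mem_nhds (show -(η / 2) < 0 by linarith))] with t h1 h2
      linarith
    have r1 := lim_le_of (l := 𝓝[>] 0) a q C' C (gt_le_ne hC') (gt_le_ne hC) fun η hη => gt_le_ne (hqa η hη)
    have r2 := lim_le_of (l := 𝓝[<] 0) a q C' C (lt_le_ne hC') (lt_le_ne hC) fun η hη => lt_le_ne (hqa η hη)
    rcases hD with rfl | rfl | rfl | rfl
    · exact r1.1
    · exact r1.2
    · exact r2.1
    · exact r2.2
  · intro hle η hη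
    have hTn := hT.eventually (gt_mem_nhds (show 0 < η / 2 by linarith))
    have fin : ∀ l : Filter ℝ, l ≤ 𝓝[≠] 0 → (∃ᶠ t in l, -(η / 2) < q t - a t) → ∃ᶠ t in l, -η < b t := by
      intro l hl hf
      refine (hf.and_eventually (hl hTn)).mono ?_
      rintro t ⟨h1, h2⟩
      linarith
    have f1 : (liminf a (𝓝[>] 0) ≤ liminf q (𝓝[>] 0) ∨ limsup a (𝓝[>] 0) ≤ limsup q (𝓝[>] 0)) →
        ∃ᶠ t in 𝓝[>] (0:ℝ), -η < b t := fun hh => fin _ gt_le_ne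
      (freq_of_lim a q C' C (gt_le_ne hC') (gt_le_ne hC) hh (η / 2) (by positivity))
    have f2 : (liminf a (𝓝[<] 0) ≤ liminf q (𝓝[<] 0) ∨ limsup a (𝓝[<] 0) ≤ limsup q (𝓝[<] 0)) →
        ∃ᶠ t in 𝓝[<] (0:ℝ), -η < b t := fun hh => fin _ lt_le_ne
      (freq_of_lim a q C' C (lt_le_ne hC') (lt_le_ne hC) hh (η / 2) (by positivity))
    constructor
    · rintro (rfl | rfl)
      · exact f1 (Or.inl hle)
      · exact f1 (Or.inr hle)
    · rintro (rfl | rfl)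
      · exact f2 (Or.inl hle)
      · exact f2 (Or.inr hle)

/-- Let `X, Y` be real Banach spaces, `U ⊆ X`, `V ⊆ Y` open, `g : U → ℝ`
continuous and a `C^{1,1}`-submersion on its zero set, `Ω = {x ∈ U : g(x) ≤ 0}` closed and
connected, `F : U → V` a `C^{1,1}`-diffeomorphism and `F(Ω)` closed.  Let `𝒟²` be any of the
four generalized second-order directional derivative operators.  Then `F(Ω)` is convex iff
`𝒟²(y ↦ g'(x)(F'(x)⁻¹F(y)))(x,h²) ≤ 𝒟²g(x,h²)` for all `x ∈ ∂Ω` and all `h ∈ ker g'(x)`. -/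
theorem stmt_3 {X Y : Type*} [NormedAddCommGroup X] [NormedSpace ℝ X] [CompleteSpace X]
    [NormedAddCommGroup Y] [NormedSpace ℝ Y] [CompleteSpace Y]
    (U : Set X) (V : Set Y) (hUo : IsOpen U) (hVo : IsOpen V)
    (g : X → ℝ) (hgc : ContinuousOn g U) (hgs : IsC11SubmersionOnZeroSet g U)
    (Ω : Set X) (hΩ : Ω = {x ∈ U | g x ≤ 0})
    (hcl : IsClosed Ω) (hconn : IsConnected Ω)
    (F : X → Y) (G : Y → X) (hF : IsC11DiffeoOn F G U V)
    (hFΩcl : IsClosed (F '' Ω))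
    (Finv' : X → Y →L[ℝ] X)
    (hFinv' : ∀ x ∈ U, (Finv' x).comp (fderiv ℝ F x) = ContinuousLinearMap.id ℝ X ∧
      (fderiv ℝ F x).comp (Finv' x) = ContinuousLinearMap.id ℝ Y)
    (D : (X → ℝ) → X → X → X → ℝ)
    (hD : D = lowD2p ∨ D = upD2p ∨ D = lowD2m ∨ D = upD2m) :
    Convex ℝ (F '' Ω) ↔
      ∀ x ∈ frontier Ω, ∀ h : X, fderiv ℝ g x h = 0 →
        D (fun y => fderiv ℝ g x (Finv' x (F y))) x h h ≤ D g x h h := by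
  obtain ⟨hFm, hGm, hGF, hFG, hFc, hFl, hGc, hGl⟩ := hF
  set φ : Y → ℝ := fun y => g (G y) with hφdef
  set K := F '' Ω with hKdef
  have hKV : K ⊆ V := by
    rintro _ ⟨x, hx, rfl⟩
    rw [hΩ] at hx
    exact hFm hx.1
  have hKφ : ∀ y ∈ V, (y ∈ K ↔ φ y ≤ 0) := by
    intro y hy
    constructor
    · rintro ⟨x, hx, rfl⟩
      rw [hΩ] at hx
      change g (G (F x)) ≤ 0
      rw [hGF x hx.1]; exact hx.2
    · intro h
      refine ⟨G y, ?_, hFG y hy⟩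
      rw [hΩ]
      exact ⟨hGm hy, h⟩
  have hF11 : ∀ x ∈ U, LC11 F x := fun x hx => LC11_of hUo hFc hx (hFl x hx)
  have hG11 : ∀ y ∈ V, LC11 G y := fun y hy => LC11_of hVo hGc hy (hGl y hy)
  have hg11 : ∀ x ∈ U, g x = 0 → LC11 g x := by
    intro x hx h0
    obtain ⟨⟨ε, hε, hsub, hc, L, hL⟩, _⟩ := hgs x hx h0
    exact ⟨ε, hε, L, fun z hz => (hc.differentiableOn one_ne_zero).differentiableAt
      (isOpen_ball.mem_nhds hz), hL⟩
  have hφ11 : ∀ x ∈ U, g x = 0 → LC11 φ (F x) := by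
    intro x hx h0
    refine LC11.comp (f := G) (g := g) ?_ (hG11 _ (hFm hx))
    rw [hGF x hx]; exact hg11 x hx h0
  have hgφ : ∀ x ∈ U, ∀ᶠ z in 𝓝 x, g z = φ (F z) := by
    intro x hx
    filter_upwards [hUo.mem_nhds hx] with z hz
    change g z = g (G (F z))
    rw [hGF z hz]
  have hgder : ∀ x ∈ U, g x = 0 → fderiv ℝ g x = (fderiv ℝ φ (F x)).comp (fderiv ℝ F x) := by
    intro x hx h0
    have h1 : g =ᶠ[𝓝 x] fun z => φ (F z) := hgφ x hx
    rw [h1.fderiv_eq]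
    exact ((hφ11 x hx h0).diffEv.self_of_nhds.hasFDerivAt.comp x
      (hF11 x hx).diffEv.self_of_nhds.hasFDerivAt).fderiv
  have hφne : ∀ x ∈ U, g x = 0 → fderiv ℝ φ (F x) ≠ 0 := by
    intro x hx h0 hcon
    apply (hgs x hx h0).2
    rw [hgder x hx h0, hcon, ContinuousLinearMap.zero_comp]
  have hlF : ∀ x ∈ U, g x = 0 → (fun y => fderiv ℝ g x (Finv' x (F y))) =
      fun z => fderiv ℝ φ (F x) (F z) := by
    intro x hx h0
    funext z
    rw [hgder x hx h0]
    have := congrArg (fun T => T (F z)) (hFinv' x hx).2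
    simp only [ContinuousLinearMap.comp_apply, ContinuousLinearMap.id_apply] at this ⊢
    rw [this]
  have hfr : ∀ x, x ∈ frontier Ω ↔ x ∈ U ∧ g x = 0 := by
    intro x
    rw [hcl.frontier_eq]
    constructor
    · rintro ⟨h1, h2⟩
      have h1' := h1
      rw [hΩ] at h1'
      refine ⟨h1'.1, ?_⟩
      by_contra hne
      have hlt : g x < 0 := lt_of_le_of_ne h1'.2 hne
      apply h2
      rw [mem_interior_iff_mem_nhds]
      have hc : ContinuousAt g x := hgc.continuousAt (hUo.mem_nhds h1'.1)
      filter_upwards [hUo.mem_nhds h1'.1, hc.eventually (gt_mem_nhds hlt)] with z hz1 hz2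
      rw [hΩ]
      exact ⟨hz1, hz2.le⟩
    · rintro ⟨h1, h2⟩
      refine ⟨by rw [hΩ]; exact ⟨h1, h2.le⟩, fun hint => ?_⟩
      apply (hgs x h1 h2).2
      apply IsLocalMax.fderiv_eq_zero
      rw [mem_interior_iff_mem_nhds] at hint
      filter_upwards [hint] with z hz
      rw [hΩ] at hz
      rw [h2]; exact hz.2
  constructor
  · intro hconv x hx h hh
    obtain ⟨hxU, hx0⟩ := (hfr x).1 hx
    rw [hlF x hxU hx0]
    have hφx := hφ11 x hxU hx0
    refine (point_facts F φ g x (hF11 x hxU) hφx (hgφ x hxU) (hg11 x hxU hx0) D hD h).1 ?_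
    set k := fderiv ℝ F x h with hk
    have hk0 : fderiv ℝ φ (F x) k = 0 := by
      rw [hgder x hxU hx0] at hh
      exact hh
    obtain ⟨ε, hε, L, hd, hL⟩ := hφx
    obtain ⟨ε', hε', hbV⟩ := Metric.isOpen_iff.1 hVo (F x) (hFm hxU)
    have hs1 : ball (F x) (min ε ε') ⊆ ball (F x) ε := ball_subset_ball (min_le_left _ _)
    have hs2 : ball (F x) (min ε ε') ⊆ ball (F x) ε' := ball_subset_ball (min_le_right _ _)
    have hφ0 : φ (F x) = 0 := by rw [← (hgφ x hxU).self_of_nhds]; exact hx0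
    have hn : ∀ k, fderiv ℝ φ (F x) k = 0 → ∀ η > 0, ∀ᶠ t in 𝓝[>] (0:ℝ), -η ≤ QQ φ (F x) k t := by
      intro k hk0 η hη
      have := nec φ K hconv (F x) (min ε ε') (lt_min hε hε') (fun z hz => hd z (hs1 hz)) L
        (hL.mono hs1) (fun z hz => hKφ z (hbV (hs2 hz))) hφ0 (hφne x hxU hx0) k hk0 η hη
      filter_upwards [this] with t ht
      rw [QQ, hk0, sub_zero]; exact ht
    intro η hη
    rw [← Set.Iio_union_Ioi, nhdsWithin_union, eventually_sup]
    refine ⟨?_, hn k hk0 η hη⟩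
    rw [map_neg_lt, eventually_map]
    filter_upwards [hn (-k) (by rw [map_neg, hk0, neg_zero]) η hη] with t ht
    rw [QQ_neg, neg_neg]; exact ht
  · intro hcond
    have hKconn : IsPreconnected K := by
      refine (hconn.image F ?_).isPreconnected
      refine hFc.continuousOn.mono ?_
      rw [hΩ]; exact fun z hz => hz.1
    -- transferred condition
    have hfreq : ∀ y ∈ V, φ y = 0 → ∀ k, fderiv ℝ φ y k = 0 → ∀ η > 0,
        ∃ᶠ t in 𝓝[>] (0:ℝ), -η < fderiv ℝ φ (y + t • k) k / t := by
      intro y hy h0 k hk η hη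
      set x := G y with hx
      have hxU : x ∈ U := hGm hy
      have hx0 : g x = 0 := h0
      have hFx : F x = y := hFG y hy
      have hmain : ∀ k, fderiv ℝ φ y k = 0 → 
          ((D = lowD2p ∨ D = upD2p) → ∃ᶠ t in 𝓝[>] (0:ℝ), -η < QQ φ y k t) ∧
          ((D = lowD2m ∨ D = upD2m) → ∃ᶠ t in 𝓝[<] (0:ℝ), -η < QQ φ y k t) := by
        intro k hk
        have hkk : fderiv ℝ F x (Finv' x k) = k := by
          have := congrArg (fun T => T k) (hFinv' x hxU).2
          simpa using this
        have hc := hcond x ((hfr x).2 ⟨hxU, hx0⟩) (Finv' x k) (by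
          rw [hgder x hxU hx0, ContinuousLinearMap.comp_apply, hkk, hFx, hk])
        rw [hlF x hxU hx0] at hc
        have := (point_facts F φ g x (hF11 x hxU) (hφ11 x hxU hx0) (hgφ x hxU) (hg11 x hxU hx0)
          D hD (Finv' x k)).2 hc η hη
        rwa [hkk, hFx] at this
      have hmain2 : ∃ᶠ t in 𝓝[>] (0:ℝ), -η < QQ φ y k t := by
        -- which side is determined by `D`, so use both `k` and `-k`
        have hpos := (hmain k hk).1
        have hneg : (D = lowD2m ∨ D = upD2m) → ∃ᶠ t in 𝓝[>] (0:ℝ), -η < QQ φ y k t := by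
          intro hDm
          have := (hmain (-k) (by rw [map_neg, hk, neg_zero])).2 hDm
          rw [map_neg_lt, frequently_map] at this
          refine this.mono fun t ht => ?_
          rw [QQ_neg]; exact ht
        rcases hD with h | h | h | h
        · exact hpos (Or.inl h)
        · exact hpos (Or.inr h)
        · exact hneg (Or.inl h)
        · exact hneg (Or.inr h)
      refine hmain2.mono fun t ht => ?_
      rw [QQ, hk, sub_zero] at ht
      exact ht
    refine tietze K hFΩcl hKconn fun p hp => ?_
    have hpV := hKV hp
    rcases eq_or_lt_of_le ((hKφ p hpV).1 hp) with h0 | hlt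
    · have hpx := hφ11 (G p) (hGm hpV) h0
      have hpn := hφne (G p) (hGm hpV) h0
      rw [hFG p hpV] at hpx hpn
      obtain ⟨ε, hε, L, hd, hL⟩ := hpx
      obtain ⟨ε', hε', hbV⟩ := Metric.isOpen_iff.1 hVo p hpV
      have hs1 : ball p (min ε ε') ⊆ ball p ε := ball_subset_ball (min_le_left _ _)
      have hs2 : ball p (min ε ε') ⊆ ball p ε' := ball_subset_ball (min_le_right _ _)
      obtain ⟨δ, hδ, hδε, hcv⟩ := local_convex φ p (min ε ε') (lt_min hε hε') (fun z hz => hd z (hs1 hz)) L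
        (hL.mono hs1) h0 hpn (fun y hy => hfreq y (hbV (hs2 hy)))
      refine ⟨δ, hδ, ?_⟩
      have e : K ∩ ball p δ = {y | φ y ≤ 0} ∩ ball p δ := by
        ext z
        constructor
        · rintro ⟨h1, h2⟩
          exact ⟨(hKφ z (hKV h1)).1 h1, h2⟩
        · rintro ⟨h1, h2⟩
          exact ⟨(hKφ z (hbV (hs2 (ball_subset_ball hδε h2)))).2 h1, h2⟩
      rw [e]; exact hcv
    · have hc1 : ContinuousAt G p := hGc.continuousOn.continuousAt (hVo.mem_nhds hpV)
      have hc2 : ContinuousAt g (G p) := hgc.continuousAt (hUo.mem_nhds (hGm hpV))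
      have hc : ContinuousAt φ p := ContinuousAt.comp (f := G) (g := g) hc2 hc1
      obtain ⟨ε, hε, hb⟩ := Metric.eventually_nhds_iff_ball.1
        ((hc.eventually (gt_mem_nhds hlt)).and (hVo.mem_nhds hpV))
      refine ⟨ε, hε, ?_⟩
      have e : K ∩ ball p ε = ball p ε := by
        refine Set.inter_eq_right.2 fun z hz => ?_
        exact (hKφ z (hb z hz).2).2 (hb z hz).1.le
      rw [e]; exact convex_ball _ _
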